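/- (Proposition 1.) Let V be a finite vertex type, G a connected simple graph on V, and s : V → V → ℝ a score function. Let u₁,…,uₙ : V be training child nodes with corresponding parent sets H(uᵢ) ⊆ V and designated true parents vᵢ ∈ H(uᵢ), for i = 1,…,n. Define the minimum-margin training loss L = ∑_{i=1}^{n} ∑_{v' ∈ V \ H(uᵢ)} max 0 (s uᵢ v' − s uᵢ vᵢ + (G.dist vᵢ v' : ℝ)). Let v̂ᵢ : V be top-ranked predicted parents, i.e. s uᵢ w ≤ s uᵢ v̂ᵢ for all w : V, and assume that for each i either v̂ᵢ = vᵢ or v̂ᵢ ∉ H(uᵢ). Then the average graph distance between true and top-ranked predicted parents is bounded by the average training loss: (1/n) ∑_{i=1}^{n} (G.dist vᵢ v̂ᵢ : ℝ) ≤ L / n. -/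

import Mathlib

section MarginViolation

variable {V R : Type*} [AddCommGroup R] [LinearOrder R] {f γ : V → R} {v v' : V}

/-- The minimum-margin constraint violation `ℰ(u, v, v')`, where `f = s u` scores the candidate
parents of a fixed child `u`, `γ = γ(u, v, ·)` is the margin required of each competitor of `v`,
and `v'` is the competitor. -/
def marginViolation (f γ : V → R) (v v' : V) : R :=
  max 0 (f v' - f v + γ v')

/-- The contribution of one training pair to the minimum-margin loss: the total violation against
the competitors in `N`. The loss of the paper takes `N` to be the set of all non-parents. -/
def marginLoss (f γ : V → R) (v : V) (N : Finset V) : R :=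
  ∑ v' ∈ N, marginViolation f γ v v'

theorem marginViolation_nonneg : 0 ≤ marginViolation f γ v v' :=
  le_max_left _ _

variable [IsOrderedAddMonoid R] {N : Finset V}

theorem margin_le_marginViolation (hf : f v ≤ f v') : γ v' ≤ marginViolation f γ v v' :=
  calc
    γ v' ≤ f v' - f v + γ v' := le_add_of_nonneg_left (sub_nonneg.2 hf)
    _ ≤ marginViolation f γ v v' := le_max_right _ _

theorem marginLoss_nonneg : 0 ≤ marginLoss f γ v N :=
  Finset.sum_nonneg fun _ _ => marginViolation_nonneg

theorem marginViolation_le_marginLoss (hN : v' ∈ N) :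
    marginViolation f γ v v' ≤ marginLoss f γ v N :=
  Finset.single_le_sum (fun _ _ => marginViolation_nonneg) hN

theorem margin_le_marginLoss (hγ : γ v ≤ 0) (hf : f v ≤ f v') (hN : v' = v ∨ v' ∈ N) :
    γ v' ≤ marginLoss f γ v N := by
  rcases hN with rfl | hN
  · exact hγ.trans marginLoss_nonneg
  · exact (margin_le_marginViolation hf).trans (marginViolation_le_marginLoss hN)

end MarginViolation

theorem avg_dist_le_avg_loss_general {ι V R : Type*} [Ring R] [LinearOrder R] [IsOrderedRing R]
    (t : Finset ι) (w : ι → R) (f γ : ι → V → R) (v vhat : ι → V) (N : ι → Finset V)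
    (hw : ∀ i ∈ t, 0 ≤ w i)
    (hγ : ∀ i ∈ t, γ i (v i) ≤ 0)
    (hf : ∀ i ∈ t, f i (v i) ≤ f i (vhat i))
    (hN : ∀ i ∈ t, vhat i = v i ∨ vhat i ∈ N i) :
    ∑ i ∈ t, w i * γ i (vhat i) ≤ ∑ i ∈ t, w i * marginLoss (f i) (γ i) (v i) (N i) :=
  Finset.sum_le_sum fun i hi =>
    mul_le_mul_of_nonneg_left (margin_le_marginLoss (hγ i hi) (hf i hi) (hN i hi)) (hw i hi)

open Finset in
/-- Proposition 1: the average graph distance between true and top-ranked predicted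
parents of the training child nodes is bounded above by the average minimum-margin
training loss with knowledge-graph-aware margins. -/
theorem avg_dist_le_avg_loss {V : Type*} [Fintype V] [DecidableEq V]
    (G : SimpleGraph V) (hG : G.Connected) (s : V → V → ℝ) (n : ℕ) (hn : 1 ≤ n)
    (u v vhat : Fin n → V) (H : Fin n → Finset V)
    (hparent : ∀ i, v i ∈ H i)
    (htop : ∀ i, ∀ w : V, s (u i) w ≤ s (u i) (vhat i))
    (hpred : ∀ i, vhat i = v i ∨ vhat i ∉ H i) :
    (1 / n : ℝ) * ∑ i : Fin n, (G.dist (v i) (vhat i) : ℝ) ≤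
      (∑ i : Fin n, ∑ v' ∈ Finset.univ \ H i,
        max 0 (s (u i) v' - s (u i) (v i) + (G.dist (v i) v' : ℝ))) / n := by
  rw [one_div, div_eq_inv_mul, mul_sum, mul_sum]
  exact avg_dist_le_avg_loss_general univ (fun _ => (n : ℝ)⁻¹) (fun i => s (u i))
    (fun i x => G.dist (v i) x) v vhat (fun i => univ \ H i) (by simp) (by simp)
    (fun i _ => htop i (v i)) (by simpa using hpred)
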